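/- For every x ∈ L_L and every y ∈ gl_+(∞), the bracket [x, y] lies in sl_+(∞), the subspace of gl_+(∞) consisting of elements of trace zero; i.e. [L_L, gl_+(∞)] ⊆ sl_+(∞). -/

import Mathlib

/- The ladder insertion-elimination Lie algebra `L_L` of Mencattini–Kreimer,
realized as the complex vector space of finitely supported functions `ℕ × ℕ → ℂ`,
with basis elements `Z n m = single (n, m) 1` and the bilinear bracket determined
on basis elements by formula (e1). -/

noncomputable section

/-- The underlying vector space of the ladder insertion-elimination Lie algebra. -/
abbrev LL : Type := (ℕ × ℕ) →₀ ℂ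

/-- The basis element `Z_{n,m}`. -/
def Z (n m : ℕ) : LL := Finsupp.single (n, m) 1

/-- `Θ(k) = 1` if `k ≥ 0`, and `0` otherwise. -/
def theta (k : ℤ) : ℂ := if 0 ≤ k then 1 else 0

/-- The Kronecker delta `δ_{n,m}`. -/
def kdelta (n m : ℕ) : ℂ := if n = m then 1 else 0

/-- Formula (e1) for the bracket `[Z_{n,m}, Z_{l,s}]` on basis elements, where
`p = (n, m)` and `q = (l, s)`.  (The natural subtractions occurring in the indices
are truncated, but every such term is multiplied by a `theta` coefficient which
vanishes whenever truncation would occur.) -/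
def zb (p q : ℕ × ℕ) : LL :=
  theta ((q.1 : ℤ) - p.2) • Z (q.1 - p.2 + p.1) q.2
    - theta ((q.2 : ℤ) - p.1) • Z q.1 (q.2 - p.1 + p.2)
    - theta ((p.1 : ℤ) - q.2) • Z (p.1 - q.2 + q.1) p.2
    + theta ((p.2 : ℤ) - q.1) • Z p.1 (p.2 - q.1 + q.2)
    - kdelta p.2 q.1 • Z p.1 q.2 + kdelta p.1 q.2 • Z q.1 p.2

/-- The bilinear extension of formula (e1) to all of `L_L`. -/
def br (x y : LL) : LL :=
  x.sum fun p a => y.sum fun q b => (a * b) • zb p q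

end

/-- The element `E_{i,j} = Z_{i,j} − Z_{i+1,j+1}` of `L_L`. -/
noncomputable def E (i j : ℕ) : LL := Z i j - Z (i + 1) (j + 1)

/-- `gl_+(∞)`, the span of the elements `E_{i,j}`; its elements satisfy the
matrix-unit relations, identifying `gl_+(∞)` with the Lie algebra of finitely
supported `ℕ×ℕ` matrices. -/
noncomputable def glInf : Submodule ℂ LL :=
  Submodule.span ℂ {x : LL | ∃ i j : ℕ, x = E i j}

/-- The trace functional on `L_L`: the linear functional sending the basis
element `Z_{n,m}` to `-n` if `n = m` and to `0` otherwise.  Under the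
identification of `gl_+(∞)` with finitely supported matrices it restricts to the
matrix trace: `Tr (E i j) = δ_{i,j}`, so `Tr (Σ c_{ij} E_{ij}) = Σ_i c_{ii}`. -/
noncomputable def Tr : LL →ₗ[ℂ] ℂ :=
  Finsupp.linearCombination ℂ (fun p : ℕ × ℕ => if p.1 = p.2 then -(p.1 : ℂ) else 0)

/-- `sl_+(∞)`, the subspace of `gl_+(∞)` of trace-zero elements. -/
noncomputable def slInf : Submodule ℂ LL := glInf ⊓ LinearMap.ker Tr

/- In the representation `Z_{n,m} = (a†)ⁿ aᵐ` with `a a† = 1`, formula (e1) is the commutator of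
the algebra of the bicyclic monoid. There `E_{i,j} = (a†)ⁱ (1 - a† a) aʲ` is a matrix unit, since
`1 - a† a` is the projection onto the vacuum. Multiplying a matrix unit by `Z_{n,m}` on either side
gives a matrix unit or zero, so the matrix units span a two-sided ideal, and the two products have
the same trace: both have trace one exactly when `i + n = j + m` and `m ≤ i`. -/

/-- The product of the bicyclic monoid `⟨a, a† | a a† = 1⟩`, with `(n, m)` standing for `(a†)ⁿ aᵐ`.
Truncated subtraction is intended here: it encodes the cancellation of `aᵐ (a†)ˡ`. -/
def bicyclicMul (p q : ℕ × ℕ) : ℕ × ℕ :=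
  (p.1 + (q.1 - p.2), q.2 + (p.2 - q.1))

/-- The associative product on `L_L` that makes it the algebra of the bicyclic monoid; its
commutator is the bracket `br`. -/
noncomputable def ladderMul : LL →ₗ[ℂ] LL →ₗ[ℂ] LL :=
  Finsupp.linearCombination ℂ fun p => Finsupp.lmapDomain ℂ ℂ (bicyclicMul p)

lemma ladderMul_Z_Z (n m l s : ℕ) :
    ladderMul (Z n m) (Z l s) = Z (n + (l - m)) (s + (m - l)) := by
  simp [ladderMul, Z, bicyclicMul]

lemma ladderMul_Z_Z_eq_theta (n m l s : ℕ) :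
    ladderMul (Z n m) (Z l s) =
      theta ((l : ℤ) - m) • Z (l - m + n) s + theta ((m : ℤ) - l) • Z n (m - l + s)
        - kdelta m l • Z n s := by
  rw [ladderMul_Z_Z, add_comm n, add_comm s]
  rcases lt_trichotomy m l with h | rfl | h
  · simp [theta, kdelta, h.le, h.not_ge, h.ne, Nat.sub_eq_zero_of_le]
  · simp [theta, kdelta]
  · simp [theta, kdelta, h.le, h.not_ge, h.ne', Nat.sub_eq_zero_of_le]

lemma kdelta_comm (n m : ℕ) : kdelta n m = kdelta m n := by
  simp only [kdelta, eq_comm]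

lemma zb_eq_commutator (p q : ℕ × ℕ) :
    zb p q = ladderMul (Z p.1 p.2) (Z q.1 q.2) - ladderMul (Z q.1 q.2) (Z p.1 p.2) := by
  rw [ladderMul_Z_Z_eq_theta, ladderMul_Z_Z_eq_theta, zb, kdelta_comm p.1]
  abel

lemma ladderMul_eq_sum (x y : LL) :
    ladderMul x y =
      x.sum fun p a => y.sum fun q b => (a * b) • ladderMul (Z p.1 p.2) (Z q.1 q.2) := by
  simpa [mul_smul, Z] using (LinearMap.sum_repr_mul_repr_mul (B := ladderMul)
    Finsupp.basisSingleOne Finsupp.basisSingleOne x y).symm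

lemma br_eq_commutator (x y : LL) : br x y = ladderMul x y - ladderMul y x := by
  rw [ladderMul_eq_sum, ladderMul_eq_sum y, Finsupp.sum_comm y]
  simp only [br, zb_eq_commutator, smul_sub, Finsupp.sum_sub, mul_comm]

lemma bilinear_apply_mem_of_Z_of_E {M : Type*} [AddCommMonoid M] [Module ℂ M]
    (B : LL →ₗ[ℂ] LL →ₗ[ℂ] M) (N : Submodule ℂ M) (hB : ∀ n m i j, B (Z n m) (E i j) ∈ N)
    (x : LL) {y : LL} (hy : y ∈ glInf) : B x y ∈ N := by
  suffices glInf ≤ N.comap (B x) from this hy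
  refine Submodule.span_le.2 ?_
  rintro _ ⟨i, j, rfl⟩
  change B x (E i j) ∈ N
  induction x using Finsupp.induction_linear with
  | zero => simp
  | add x x' hx hx' => simpa using N.add_mem hx hx'
  | single p a =>
    have single_eq_smul_Z : Finsupp.single p a = a • Z p.1 p.2 := by simp [Z]
    rw [single_eq_smul_Z, map_smul]
    exact N.smul_mem a (hB p.1 p.2 i j)

lemma ladderMul_Z_E (n m i j : ℕ) :
    ladderMul (Z n m) (E i j) = if m ≤ i then E (n + (i - m)) j else 0 := by
  simp only [E, map_sub, ladderMul_Z_Z]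
  split_ifs with h
  · rw [show n + (i + 1 - m) = n + (i - m) + 1 by lia, show j + (m - i) = j by lia,
      show j + 1 + (m - (i + 1)) = j + 1 by lia]
  · rw [show n + (i + 1 - m) = n + (i - m) by lia,
      show j + 1 + (m - (i + 1)) = j + (m - i) by lia, sub_self]

lemma ladderMul_E_Z (i j n m : ℕ) :
    ladderMul (E i j) (Z n m) = if n ≤ j then E i (m + (j - n)) else 0 := by
  simp only [E, map_sub, LinearMap.sub_apply, ladderMul_Z_Z]
  split_ifs with h
  · rw [show m + (j + 1 - n) = m + (j - n) + 1 by lia, show i + (n - j) = i by lia,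
      show i + 1 + (n - (j + 1)) = i + 1 by lia]
  · rw [show m + (j + 1 - n) = m + (j - n) by lia,
      show i + 1 + (n - (j + 1)) = i + (n - j) by lia, sub_self]

lemma E_mem_glInf (i j : ℕ) : E i j ∈ glInf :=
  Submodule.subset_span ⟨i, j, rfl⟩

lemma ladderMul_mem_glInf_of_right (x : LL) {y : LL} (hy : y ∈ glInf) :
    ladderMul x y ∈ glInf := by
  refine bilinear_apply_mem_of_Z_of_E ladderMul glInf (fun n m i j => ?_) x hy
  rw [ladderMul_Z_E]
  split_ifs
  exacts [E_mem_glInf _ _, zero_mem _]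

lemma ladderMul_mem_glInf_of_left {y : LL} (hy : y ∈ glInf) (x : LL) :
    ladderMul y x ∈ glInf := by
  refine bilinear_apply_mem_of_Z_of_E ladderMul.flip glInf (fun n m i j => ?_) x hy
  rw [LinearMap.flip_apply, ladderMul_E_Z]
  split_ifs
  exacts [E_mem_glInf _ _, zero_mem _]

lemma Tr_E (i j : ℕ) : Tr (E i j) = if i = j then 1 else 0 := by
  by_cases h : i = j <;> simp [Tr, E, Z, h]

lemma Tr_ladderMul_Z_E_comm (n m i j : ℕ) :
    Tr (ladderMul (Z n m) (E i j)) = Tr (ladderMul (E i j) (Z n m)) := by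
  have same_diagonal : (m ≤ i ∧ n + (i - m) = j) ↔ (n ≤ j ∧ i = m + (j - n)) := by lia
  simp only [ladderMul_Z_E, ladderMul_E_Z, apply_ite Tr, Tr_E, map_zero, ← ite_and, same_diagonal]

lemma Tr_ladderMul_comm_of_mem_glInf (x : LL) {y : LL} (hy : y ∈ glInf) :
    Tr (ladderMul x y) = Tr (ladderMul y x) := by
  have mem_bot := bilinear_apply_mem_of_Z_of_E
    (ladderMul.compr₂ Tr - (ladderMul.compr₂ Tr).flip) ⊥
    (fun n m i j => by simp [Tr_ladderMul_Z_E_comm]) x hy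
  simpa [sub_eq_zero] using mem_bot

/-- `[L_L, gl_+(∞)] ⊆ sl_+(∞)`. -/
theorem bracket_LL_glInf_subset_slInf :
    ∀ x y : LL, y ∈ glInf → br x y ∈ slInf := by
  intro x y hy
  rw [br_eq_commutator]
  have mem_glInf : ladderMul x y - ladderMul y x ∈ glInf :=
    sub_mem (ladderMul_mem_glInf_of_right x hy) (ladderMul_mem_glInf_of_left hy x)
  have trace_eq_zero : Tr (ladderMul x y - ladderMul y x) = 0 := by
    rw [map_sub, Tr_ladderMul_comm_of_mem_glInf x hy, sub_self]
  exact ⟨mem_glInf, trace_eq_zero⟩
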